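/- Let f: ℝⁿ → ℝ be L-smooth, bounded below by f*, and suppose a direct-search method with polling sets of cosine measure at least τ > 0, directions of unit norm, forcing function ρ(α) = c·α², and stepsize updates α_{k+1} = γ·α_k (success) or α_{k+1} = θ·α_k (failure), 0 < θ < 1 ≤ γ, is run from x_0. Then for any ε > 0, the first index k at which ‖∇f(x_k)‖ ≤ ε occurs after at most O(τ⁻²ε⁻²) iterations, where the constant depends only on L, c, θ, γ, α_0, and f(x_0) - f*. -/

import Mathlib

local notation "⟪" x ", " y "⟫" => @inner ℝ _ _ x y

/-!
If polling fails at a point where the derivative does not vanish, the quadratic Taylor bound along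
a polling direction `d` with `-f' x d ≥ τ ‖f' x‖` gives `τ ‖f' x‖ ≤ (L / 2 + c) α`. Hence, as long
as `‖f' (x k)‖ > ε`, the stepsizes stay above `m = min α₀ (θ τ ε / (L / 2 + c))`.

Above such a floor the potential `(1 + log γ / log θ⁻¹) f(x_k) / (c m²) + log α_k / log θ⁻¹` drops
by at least one in every iteration: a failure multiplies the stepsize by `θ`, and a success lowers
`f` by `c m²`, which pays for the iteration and for the increase of the stepsize by `γ`. Therefore
at most `O(m⁻²)` iterations are possible. Finally `m⁻² = O(τ⁻² ε⁻²)`: if `m = α₀`, use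
`(τ ε)² ≤ 2 L (f(x₀) - f*)`, which holds because `f` could otherwise be pushed below `f*`
along a polling direction.
-/

section Smooth

variable {E F : Type*} [NormedAddCommGroup E] [NormedSpace ℝ E]
  [NormedAddCommGroup F] [NormedSpace ℝ F]

theorem norm_image_add_sub_sub_fderiv_le {f : E → F} {f' : E → E →L[ℝ] F} {L : ℝ} {x : E}
    (hf : ∀ y, HasFDerivAt f (f' y) y) (hL : ∀ y, ‖f' y - f' x‖ ≤ L * ‖y - x‖) (v : E) :
    ‖f (x + v) - f x - f' x v‖ ≤ L / 2 * ‖v‖ ^ 2 := by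
  let r : ℝ → F := fun t => f (x + t • v) - f x - t • f' x v
  have hr : ∀ t, HasDerivAt r (f' (x + t • v) v - f' x v) t := by
    intro t
    have hline : HasDerivAt (fun t : ℝ => x + t • v) v t := by
      simpa using ((hasDerivAt_id t).smul_const v).const_add x
    have hlin : HasDerivAt (fun t : ℝ => t • f' x v) (f' x v) t := by
      simpa using (hasDerivAt_id t).smul_const (f' x v)
    exact (((hf _).comp_hasDerivAt t hline).sub_const (f x)).sub hlin
  have hB : ∀ t : ℝ, HasDerivAt (fun t => L / 2 * ‖v‖ ^ 2 * t ^ 2) (L * t * ‖v‖ ^ 2) t := fun t =>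
    ((hasDerivAt_pow 2 t).const_mul _).congr_deriv (by push_cast; ring)
  have hr' : ∀ t ∈ Set.Ico (0 : ℝ) 1, ‖f' (x + t • v) v - f' x v‖ ≤ L * t * ‖v‖ ^ 2 := by
    intro t ht
    calc ‖f' (x + t • v) v - f' x v‖ ≤ ‖f' (x + t • v) - f' x‖ * ‖v‖ :=
          (f' (x + t • v) - f' x).le_opNorm v
      _ ≤ L * ‖x + t • v - x‖ * ‖v‖ := by gcongr; exact hL _
      _ = L * t * ‖v‖ ^ 2 := by
          rw [add_sub_cancel_left, norm_smul, Real.norm_of_nonneg ht.1]; ring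
  simpa [r] using image_norm_le_of_norm_deriv_right_le_deriv_boundary
    (fun t _ => (hr t).continuousAt.continuousWithinAt) (fun t _ => (hr t).hasDerivWithinAt)
    (by simp [r]) hB hr' (Set.right_mem_Icc.2 zero_le_one)

variable {f : E → ℝ} {f' : E → StrongDual ℝ E} {L : ℝ} {x : E}

theorem image_add_le_of_fderiv_lipschitz (hf : ∀ y, HasFDerivAt f (f' y) y)
    (hL : ∀ y, ‖f' y - f' x‖ ≤ L * ‖y - x‖) (v : E) :
    f (x + v) ≤ f x + f' x v + L / 2 * ‖v‖ ^ 2 := by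
  have := (le_abs_self _).trans (norm_image_add_sub_sub_fderiv_le hf hL v)
  linarith

theorem sq_fderiv_apply_le_of_lower_bound (hf : ∀ y, HasFDerivAt f (f' y) y)
    (hL : ∀ y, ‖f' y - f' x‖ ≤ L * ‖y - x‖) {b : ℝ} (hb : ∀ y, b ≤ f y) (v : E) :
    f' x v ^ 2 ≤ 2 * L * (f x - b) * ‖v‖ ^ 2 := by
  have hquad : ∀ s : ℝ, 0 ≤ L / 2 * ‖v‖ ^ 2 * (s * s) + f' x v * s + (f x - b) := by
    intro s
    have h := (hb _).trans (image_add_le_of_fderiv_lipschitz hf hL (s • v))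
    rw [map_smul, smul_eq_mul, norm_smul, mul_pow, Real.norm_eq_abs, sq_abs] at h
    linarith
  have := discrim_le_zero hquad
  rw [discrim] at this
  linarith

end Smooth

section Run

variable {E : Type*} [AddCommGroup E] [Module ℝ E]

/-- Polling at `x` with stepsize `α` along the directions `D` is unsuccessful: no trial point
satisfies the sufficient decrease condition with forcing function `c * α ^ 2`. -/
def PollFails (f : E → ℝ) (c : ℝ) (D : Set E) (x : E) (α : ℝ) : Prop :=
  ∀ d ∈ D, f x - c * α ^ 2 ≤ f (x + α • d)

/-- `x` and `α` are the iterates and stepsizes of a direct search on `f` with polling sets `D`,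
forcing function `c * α ^ 2`, contraction factor `θ` and expansion factor `γ`. Any successful
polling direction may be accepted. -/
def IsDirectSearch (f : E → ℝ) (c θ γ : ℝ) (D : ℕ → Set E) (x : ℕ → E) (α : ℕ → ℝ) : Prop :=
  ∀ k, ((∃ d ∈ D k, x (k + 1) = x k + α k • d ∧ f (x (k + 1)) < f (x k) - c * α k ^ 2) ∧
      α (k + 1) = γ * α k) ∨
    (PollFails f c (D k) (x k) (α k) ∧ x (k + 1) = x k ∧ α (k + 1) = θ * α k)

/-- A Lyapunov function for direct search with stepsizes at least `m`, evaluated at objective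
value `v` and stepsize `a`. The weight of `v` makes a success outweigh the expansion by `γ`. -/
noncomputable def searchPotential (c θ γ m v a : ℝ) : ℝ :=
  (1 + Real.logb θ⁻¹ γ) * (v / (c * m ^ 2)) + Real.logb θ⁻¹ a

/-- The number of iterations a direct search can perform with stepsizes at least `m`, in units of
`m⁻¹ ^ 2`, when it starts with stepsize `α₀` and the objective can decrease by at most `Δ`. -/
noncomputable def iterationBudget (c θ γ α₀ Δ : ℝ) : ℝ :=
  (1 + Real.logb θ⁻¹ γ) * (Δ / c) + α₀ ^ 2 / Real.log θ⁻¹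

theorem iterationBudget_pos {c θ γ α₀ Δ : ℝ} (hc : 0 < c) (hθ0 : 0 < θ) (hθ1 : θ < 1)
    (hγ : 1 ≤ γ) (hα₀ : 0 < α₀) (hΔ : 0 ≤ Δ) : 0 < iterationBudget c θ γ α₀ Δ := by
  have hθ : 1 < θ⁻¹ := one_lt_inv_iff₀.2 ⟨hθ0, hθ1⟩
  have := Real.log_pos hθ
  have := Real.logb_nonneg hθ hγ
  unfold iterationBudget
  positivity

namespace IsDirectSearch

variable {f : E → ℝ} {c θ γ : ℝ} {D : ℕ → Set E} {x : ℕ → E} {α : ℕ → ℝ}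

theorem stepsize_pos (h : IsDirectSearch f c θ γ D x α) (hθ : 0 < θ) (hγ : 0 < γ)
    (hα : 0 < α 0) (k : ℕ) : 0 < α k := by
  induction k with
  | zero => exact hα
  | succ k ih =>
    rcases h k with ⟨-, hs⟩ | ⟨-, -, hs⟩
    · exact hs ▸ mul_pos hγ ih
    · exact hs ▸ mul_pos hθ ih

theorem min_le_stepsize (h : IsDirectSearch f c θ γ D x α) (hθ : 0 < θ) (hγ : 1 ≤ γ)
    (hα : 0 < α 0) {s : ℝ} {k : ℕ}
    (hs : ∀ j < k, PollFails f c (D j) (x j) (α j) → s ≤ α j) : min (α 0) (θ * s) ≤ α k := by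
  induction k with
  | zero => exact min_le_left _ _
  | succ k ih =>
    rcases h k with ⟨-, hsucc⟩ | ⟨hfail, -, hsucc⟩
    · have hαk := (h.stepsize_pos hθ (one_pos.trans_le hγ) hα k).le
      exact hsucc ▸ (ih fun j hj => hs j (hj.trans k.lt_succ_self)).trans
        (le_mul_of_one_le_left hαk hγ)
    · exact hsucc ▸ (min_le_right _ _).trans
        (mul_le_mul_of_nonneg_left (hs k k.lt_succ_self hfail) hθ.le)

theorem searchPotential_succ_add_one_le (h : IsDirectSearch f c θ γ D x α) (hc : 0 < c)
    (hθ0 : 0 < θ) (hθ1 : θ < 1) (hγ : 1 ≤ γ) {m : ℝ} (hm : 0 < m) {k : ℕ} (hk : m ≤ α k) :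
    searchPotential c θ γ m (f (x (k + 1))) (α (k + 1)) + 1 ≤
      searchPotential c θ γ m (f (x k)) (α k) := by
  have hα : α k ≠ 0 := (hm.trans_le hk).ne'
  have hθ : 1 < θ⁻¹ := one_lt_inv_iff₀.2 ⟨hθ0, hθ1⟩
  unfold searchPotential
  rcases h k with ⟨⟨d, -, -, hdec⟩, hs⟩ | ⟨-, hx, hs⟩
  · have hv : f (x (k + 1)) / (c * m ^ 2) + 1 ≤ f (x k) / (c * m ^ 2) := by
      rw [div_add_one (by positivity)]
      gcongr
      have : c * m ^ 2 ≤ c * α k ^ 2 := by gcongr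
      linarith
    have hweight : 0 ≤ 1 + Real.logb θ⁻¹ γ := add_nonneg zero_le_one (Real.logb_nonneg hθ hγ)
    rw [hs, Real.logb_mul (one_pos.trans_le hγ).ne' hα]
    linarith [mul_le_mul_of_nonneg_left hv hweight]
  · have hlog : Real.logb θ⁻¹ θ = -1 := by
      rw [Real.logb_inv_base, Real.logb_self_eq_one_iff.2 ⟨hθ0.ne', hθ1.ne, by linarith⟩]
    rw [hx, hs, Real.logb_mul hθ0.ne' hα, hlog]
    linarith

theorem searchPotential_add_le (h : IsDirectSearch f c θ γ D x α) (hc : 0 < c)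
    (hθ0 : 0 < θ) (hθ1 : θ < 1) (hγ : 1 ≤ γ) {m : ℝ} (hm : 0 < m) {k : ℕ}
    (hk : ∀ j < k, m ≤ α j) :
    searchPotential c θ γ m (f (x k)) (α k) + k ≤ searchPotential c θ γ m (f (x 0)) (α 0) := by
  induction k with
  | zero => simp
  | succ k ih =>
    have hstep := h.searchPotential_succ_add_one_le hc hθ0 hθ1 hγ hm (hk k k.lt_succ_self)
    have := ih fun j hj => hk j (hj.trans k.lt_succ_self)
    push_cast
    linarith

theorem le_iterationBudget_mul (h : IsDirectSearch f c θ γ D x α) (hc : 0 < c)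
    (hθ0 : 0 < θ) (hθ1 : θ < 1) (hγ : 1 ≤ γ) (hα : 0 < α 0) {m Δ : ℝ} (hm : 0 < m) {k : ℕ}
    (hk : ∀ j ≤ k, m ≤ α j) (hΔ : f (x 0) - f (x k) ≤ Δ) :
    k ≤ iterationBudget c θ γ (α 0) Δ * m⁻¹ ^ 2 := by
  have hθ : 1 < θ⁻¹ := one_lt_inv_iff₀.2 ⟨hθ0, hθ1⟩
  have hlogθ := Real.log_pos hθ
  have hlogγ := Real.logb_nonneg hθ hγ
  have hlog : Real.logb θ⁻¹ (α 0) - Real.logb θ⁻¹ (α k) ≤ (α 0 / m) ^ 2 / Real.log θ⁻¹ := by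
    have hlog_le_sq : Real.log (α 0 / m) ≤ (α 0 / m) ^ 2 := by
      linarith [Real.log_le_sub_one_of_pos (div_pos hα hm), sq_nonneg (α 0 / m - 1),
        div_pos hα hm]
    calc Real.logb θ⁻¹ (α 0) - Real.logb θ⁻¹ (α k)
        ≤ Real.logb θ⁻¹ (α 0) - Real.logb θ⁻¹ m :=
          sub_le_sub_left (Real.logb_le_logb_of_le hθ hm (hk k le_rfl)) _
      _ = Real.log (α 0 / m) / Real.log θ⁻¹ := (Real.logb_div hα.ne' hm.ne').symm
      _ ≤ (α 0 / m) ^ 2 / Real.log θ⁻¹ := by gcongr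
  have hpot := h.searchPotential_add_le hc hθ0 hθ1 hγ hm fun j hj => hk j hj.le
  unfold searchPotential at hpot
  calc (k : ℝ) ≤ (1 + Real.logb θ⁻¹ γ) * ((f (x 0) - f (x k)) / (c * m ^ 2)) +
        (Real.logb θ⁻¹ (α 0) - Real.logb θ⁻¹ (α k)) := by rw [sub_div]; linarith
    _ ≤ (1 + Real.logb θ⁻¹ γ) * (Δ / (c * m ^ 2)) + (α 0 / m) ^ 2 / Real.log θ⁻¹ := by gcongr
    _ = iterationBudget c θ γ (α 0) Δ * m⁻¹ ^ 2 := by unfold iterationBudget; field_simp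

end IsDirectSearch

end Run

section PollingSet

/-- `D` consists of unit vectors and its cosine measure is at least `τ`. In a general normed space
the role of the vectors `v` in `τ * ‖v‖ ≤ ⟪d, v⟫` is played by continuous linear functionals. -/
structure IsPollingSet {E : Type*} [NormedAddCommGroup E] [NormedSpace ℝ E] (τ : ℝ)
    (D : Set E) : Prop where
  norm_eq_one : ∀ d ∈ D, ‖d‖ = 1
  exists_mul_norm_le : ∀ φ : StrongDual ℝ E, φ ≠ 0 → ∃ d ∈ D, τ * ‖φ‖ ≤ φ d

namespace IsPollingSet

theorem of_inner {E : Type*} [NormedAddCommGroup E] [InnerProductSpace ℝ E] [CompleteSpace E]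
    {τ : ℝ} {D : Set E} (hunit : ∀ d ∈ D, ‖d‖ = 1)
    (hcos : ∀ v : E, v ≠ 0 → ∃ d ∈ D, τ * ‖v‖ ≤ ⟪d, v⟫) : IsPollingSet τ D where
  norm_eq_one := hunit
  exists_mul_norm_le φ hφ := by
    obtain ⟨v, rfl⟩ := (InnerProductSpace.toDual ℝ E).surjective φ
    obtain ⟨d, hd, hle⟩ := hcos v (by simpa using hφ)
    exact ⟨d, hd, by simpa [real_inner_comm] using hle⟩

variable {E : Type*} [NormedAddCommGroup E] [NormedSpace ℝ E] {f : E → ℝ}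
  {f' : E → StrongDual ℝ E} {L τ : ℝ} {D : Set E} {x : E}

theorem mul_norm_fderiv_le_of_pollFails (hD : IsPollingSet τ D)
    (hf : ∀ y, HasFDerivAt f (f' y) y) (hL : ∀ y, ‖f' y - f' x‖ ≤ L * ‖y - x‖)
    (hx : f' x ≠ 0) {c α : ℝ} (hα : 0 < α) (hfail : PollFails f c D x α) :
    τ * ‖f' x‖ ≤ (L / 2 + c) * α := by
  obtain ⟨d, hd, hcos⟩ := hD.exists_mul_norm_le (-f' x) (neg_ne_zero.2 hx)
  rw [norm_neg, neg_apply] at hcos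
  have htaylor := image_add_le_of_fderiv_lipschitz hf hL (α • d)
  rw [map_smul, smul_eq_mul, norm_smul, hD.norm_eq_one d hd, mul_one, Real.norm_of_nonneg hα.le]
    at htaylor
  have hnodec := hfail d hd
  refine hcos.trans (le_of_mul_le_mul_left ?_ hα)
  linarith

theorem sq_mul_norm_fderiv_le (hD : IsPollingSet τ D) (hτ : 0 ≤ τ)
    (hf : ∀ y, HasFDerivAt f (f' y) y) (hL : ∀ y, ‖f' y - f' x‖ ≤ L * ‖y - x‖)
    (hx : f' x ≠ 0) {b : ℝ} (hb : ∀ y, b ≤ f y) :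
    (τ * ‖f' x‖) ^ 2 ≤ 2 * L * (f x - b) := by
  obtain ⟨d, hd, hcos⟩ := hD.exists_mul_norm_le (f' x) hx
  calc (τ * ‖f' x‖) ^ 2 ≤ f' x d ^ 2 := by gcongr
    _ ≤ 2 * L * (f x - b) * ‖d‖ ^ 2 := sq_fderiv_apply_le_of_lower_bound hf hL hb d
    _ = 2 * L * (f x - b) := by rw [hD.norm_eq_one d hd, one_pow, mul_one]

end IsPollingSet

end PollingSet

section Complexity

theorem inv_sq_min_le_add (a b : ℝ) : (min a b)⁻¹ ^ 2 ≤ a⁻¹ ^ 2 + b⁻¹ ^ 2 := by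
  rcases min_choice a b with h | h <;> rw [h]
  · exact le_add_of_nonneg_right (sq_nonneg _)
  · exact le_add_of_nonneg_left (sq_nonneg _)

/-- The factor `B` in the bound `m⁻¹ ^ 2 ≤ B * (τ * ε)⁻¹ ^ 2` for the smallest stepsize
`m = min α₀ (θ * (τ * ε / (L / 2 + c)))`; each summand accounts for one argument of `min`. -/
noncomputable def stepsizeFactor (L c θ α₀ Δ : ℝ) : ℝ :=
  2 * L * Δ / α₀ ^ 2 + ((L / 2 + c) / θ) ^ 2

theorem inv_sq_min_le_stepsizeFactor_mul {L c θ α₀ Δ t : ℝ} (ht : 0 < t)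
    (htΔ : t ^ 2 ≤ 2 * L * Δ) :
    (min α₀ (θ * (t / (L / 2 + c))))⁻¹ ^ 2 ≤ stepsizeFactor L c θ α₀ Δ * t⁻¹ ^ 2 := by
  have hα₀ : α₀⁻¹ ^ 2 ≤ 2 * L * Δ / α₀ ^ 2 * t⁻¹ ^ 2 := by
    have hone : 1 ≤ 2 * L * Δ / t ^ 2 := (one_le_div (by positivity)).2 htΔ
    calc α₀⁻¹ ^ 2 ≤ α₀⁻¹ ^ 2 * (2 * L * Δ / t ^ 2) := le_mul_of_one_le_right (sq_nonneg _) hone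
      _ = 2 * L * Δ / α₀ ^ 2 * t⁻¹ ^ 2 := by ring
  calc (min α₀ (θ * (t / (L / 2 + c))))⁻¹ ^ 2
      ≤ α₀⁻¹ ^ 2 + (θ * (t / (L / 2 + c)))⁻¹ ^ 2 := inv_sq_min_le_add _ _
    _ ≤ 2 * L * Δ / α₀ ^ 2 * t⁻¹ ^ 2 + (θ * (t / (L / 2 + c)))⁻¹ ^ 2 := by gcongr
    _ = stepsizeFactor L c θ α₀ Δ * t⁻¹ ^ 2 := by
      rw [stepsizeFactor, mul_inv, inv_div]; ring

/-- The constant `C` in the iteration bound `C * τ⁻¹ ^ 2 * ε⁻¹ ^ 2` for direct search. -/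
noncomputable def complexityConst (L c θ γ α₀ Δ : ℝ) : ℝ :=
  iterationBudget c θ γ α₀ Δ * stepsizeFactor L c θ α₀ Δ

theorem complexityConst_pos {L c θ γ α₀ Δ : ℝ} (hL : 0 ≤ L) (hc : 0 < c) (hθ0 : 0 < θ)
    (hθ1 : θ < 1) (hγ : 1 ≤ γ) (hα₀ : 0 < α₀) (hΔ : 0 ≤ Δ) :
    0 < complexityConst L c θ γ α₀ Δ := by
  have := iterationBudget_pos hc hθ0 hθ1 hγ hα₀ hΔ
  unfold complexityConst stepsizeFactor
  positivity

theorem exists_and_cast_le_of_forall_not {P : ℕ → Prop} {B : ℝ}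
    (h : ∀ N : ℕ, (∀ j < N, ¬P j) → (N : ℝ) ≤ B) : ∃ k, P k ∧ (k : ℝ) ≤ B := by
  classical
  have hex : ∃ k, P k := by
    by_contra! hP
    obtain ⟨N, hN⟩ := exists_nat_gt B
    exact hN.not_ge (h N fun j _ => hP j)
  exact ⟨Nat.find hex, Nat.find_spec hex, h _ fun _ => Nat.find_min hex⟩

variable {E : Type*} [NormedAddCommGroup E] [NormedSpace ℝ E]

theorem IsDirectSearch.min_le_stepsize_of_lt_norm_fderiv {f : E → ℝ} {f' : E → StrongDual ℝ E}
    {L c θ γ τ ε : ℝ} {D : ℕ → Set E} {x : ℕ → E} {α : ℕ → ℝ} {k : ℕ}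
    (h : IsDirectSearch f c θ γ D x α) (hLc : 0 < L / 2 + c) (hθ : 0 < θ) (hγ : 1 ≤ γ)
    (hα : 0 < α 0) (hf : ∀ y, HasFDerivAt f (f' y) y)
    (hLip : ∀ y z, ‖f' y - f' z‖ ≤ L * ‖y - z‖) (hτ : 0 ≤ τ) (hε : 0 ≤ ε)
    (hD : ∀ k, IsPollingSet τ (D k)) (hk : ∀ j < k, ε < ‖f' (x j)‖) :
    min (α 0) (θ * (τ * ε / (L / 2 + c))) ≤ α k := by
  refine h.min_le_stepsize hθ hγ hα fun j hj hpoll => ?_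
  have hαj := h.stepsize_pos hθ (one_pos.trans_le hγ) hα j
  have hne : f' (x j) ≠ 0 := norm_pos_iff.1 (hε.trans_lt (hk j hj))
  rw [div_le_iff₀' hLc]
  calc τ * ε ≤ τ * ‖f' (x j)‖ := mul_le_mul_of_nonneg_left (hk j hj).le hτ
    _ ≤ (L / 2 + c) * α j := (hD j).mul_norm_fderiv_le_of_pollFails hf (hLip · _) hne hαj hpoll

theorem IsDirectSearch.le_complexityConst_mul {f : E → ℝ} {f' : E → StrongDual ℝ E}
    {L c θ γ Δ fstar τ ε : ℝ} {D : ℕ → Set E} {x : ℕ → E} {α : ℕ → ℝ} {N : ℕ}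
    (h : IsDirectSearch f c θ γ D x α) (hL : 0 ≤ L) (hc : 0 < c) (hθ0 : 0 < θ) (hθ1 : θ < 1)
    (hγ : 1 ≤ γ) (hα : 0 < α 0) (hf : ∀ y, HasFDerivAt f (f' y) y)
    (hLip : ∀ y z, ‖f' y - f' z‖ ≤ L * ‖y - z‖) (hfstar : ∀ y, fstar ≤ f y)
    (hΔ : f (x 0) - fstar ≤ Δ) (hτ : 0 < τ) (hε : 0 < ε) (hD : ∀ k, IsPollingSet τ (D k))
    (hN : ∀ j < N, ε < ‖f' (x j)‖) :
    N ≤ complexityConst L c θ γ (α 0) Δ * τ⁻¹ ^ 2 * ε⁻¹ ^ 2 := by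
  have hΔ0 : 0 ≤ Δ := (sub_nonneg.2 (hfstar (x 0))).trans hΔ
  rcases N.eq_zero_or_pos with rfl | hNpos
  · have := complexityConst_pos hL hc hθ0 hθ1 hγ hα hΔ0
    rw [Nat.cast_zero]
    positivity
  have hne : f' (x 0) ≠ 0 := norm_pos_iff.1 (hε.trans (hN 0 hNpos))
  have hτε : (τ * ε) ^ 2 ≤ 2 * L * Δ := by
    calc (τ * ε) ^ 2 ≤ (τ * ‖f' (x 0)‖) ^ 2 := by gcongr; exact (hN 0 hNpos).le
      _ ≤ 2 * L * (f (x 0) - fstar) :=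
        (hD 0).sq_mul_norm_fderiv_le hτ.le hf (hLip · _) hne hfstar
      _ ≤ 2 * L * Δ := by gcongr
  set m := min (α 0) (θ * (τ * ε / (L / 2 + c)))
  have hm : 0 < m := lt_min hα (by positivity)
  have hfloor : ∀ j ≤ N, m ≤ α j := fun j hj =>
    h.min_le_stepsize_of_lt_norm_fderiv (by positivity) hθ0 hγ hα hf hLip hτ.le hε.le hD
      fun i hi => hN i (hi.trans_le hj)
  calc (N : ℝ) ≤ iterationBudget c θ γ (α 0) Δ * m⁻¹ ^ 2 :=
        h.le_iterationBudget_mul hc hθ0 hθ1 hγ hα hm hfloor (by linarith [hfstar (x N)])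
    _ ≤ iterationBudget c θ γ (α 0) Δ * (stepsizeFactor L c θ (α 0) Δ * (τ * ε)⁻¹ ^ 2) :=
        mul_le_mul_of_nonneg_left (inv_sq_min_le_stepsizeFactor_mul (by positivity) hτε)
          (iterationBudget_pos hc hθ0 hθ1 hγ hα hΔ0).le
    _ = complexityConst L c θ γ (α 0) Δ * τ⁻¹ ^ 2 * ε⁻¹ ^ 2 := by
        rw [complexityConst, mul_inv]; ring

theorem stmt12_general {f : E → ℝ} {f' : E → StrongDual ℝ E} {L c θ γ Δ fstar τ ε : ℝ}
    {D : ℕ → Set E} {x : ℕ → E} {α : ℕ → ℝ} (h : IsDirectSearch f c θ γ D x α) (hL : 0 ≤ L)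
    (hc : 0 < c) (hθ0 : 0 < θ) (hθ1 : θ < 1) (hγ : 1 ≤ γ) (hα : 0 < α 0)
    (hf : ∀ y, HasFDerivAt f (f' y) y) (hLip : ∀ y z, ‖f' y - f' z‖ ≤ L * ‖y - z‖)
    (hfstar : ∀ y, fstar ≤ f y) (hΔ : f (x 0) - fstar ≤ Δ) (hτ : 0 < τ) (hε : 0 < ε)
    (hD : ∀ k, IsPollingSet τ (D k)) :
    ∃ k : ℕ, ‖f' (x k)‖ ≤ ε ∧
      (k : ℝ) ≤ complexityConst L c θ γ (α 0) Δ * τ⁻¹ ^ 2 * ε⁻¹ ^ 2 :=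
  exists_and_cast_le_of_forall_not fun _ hN =>
    h.le_complexityConst_mul hL hc hθ0 hθ1 hγ hα hf hLip hfstar hΔ hτ hε hD
      fun j hj => not_le.1 (hN j hj)

end Complexity

/-- worst-case complexity of direct search with sufficient decrease
`ρ(α) = c α²`, unit-norm poll directions with cosine measure at least `τ`, and
stepsize updates `γ α_k` / `θ α_k`. There is a constant `C` depending only on
`L, c, θ, γ, α₀` and `Δ ≥ f(x₀) - f*` such that an iterate with `‖∇f(x_k)‖ ≤ ε`
is reached within `C τ⁻² ε⁻²` iterations. -/
theorem stmt12 (L c θ γ α0 Δ : ℝ) (hL : 0 ≤ L) (hc : 0 < c)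
    (hθ0 : 0 < θ) (hθ1 : θ < 1) (hγ : 1 ≤ γ) (hα0 : 0 < α0) (hΔ : 0 ≤ Δ) :
    ∃ C : ℝ, 0 < C ∧
      ∀ (n : ℕ) (f : EuclideanSpace ℝ (Fin n) → ℝ)
        (g : EuclideanSpace ℝ (Fin n) → EuclideanSpace ℝ (Fin n))
        (fstar : ℝ) (x : ℕ → EuclideanSpace ℝ (Fin n)) (αs : ℕ → ℝ)
        (D : ℕ → Finset (EuclideanSpace ℝ (Fin n))) (τ ε : ℝ),
        (∀ y, HasGradientAt f (g y) y) →
        (∀ y z, ‖g y - g z‖ ≤ L * ‖y - z‖) →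
        (∀ y, fstar ≤ f y) → (f (x 0) - fstar ≤ Δ) →
        0 < τ → 0 < ε →
        (∀ k, ∀ d ∈ D k, ‖d‖ = 1) →
        (∀ k, ∀ v : EuclideanSpace ℝ (Fin n), v ≠ 0 → ∃ d ∈ D k, τ * ‖v‖ ≤ ⟪d, v⟫) →
        αs 0 = α0 →
        (∀ k, ((∃ d ∈ D k, x (k + 1) = x k + αs k • d ∧
                  f (x (k + 1)) < f (x k) - c * (αs k) ^ 2) ∧ αs (k + 1) = γ * αs k) ∨
              ((∀ d ∈ D k, f (x k) - c * (αs k) ^ 2 ≤ f (x k + αs k • d)) ∧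
                x (k + 1) = x k ∧ αs (k + 1) = θ * αs k)) →
        ∃ k : ℕ, ‖g (x k)‖ ≤ ε ∧ (k : ℝ) ≤ C * τ⁻¹ ^ 2 * ε⁻¹ ^ 2 := by
  refine ⟨complexityConst L c θ γ α0 Δ, complexityConst_pos hL hc hθ0 hθ1 hγ hα0 hΔ, ?_⟩
  rintro n f g fstar x αs D τ ε hg hLip hfstar hΔ' hτ hε hunit hcos rfl hrun
  simpa using stmt12_general (f' := fun y => InnerProductSpace.toDual ℝ _ (g y))
    (D := fun k => D k) hrun hL hc hθ0 hθ1 hγ hα0 (fun y => (hg y).hasFDerivAt)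
    (fun y z => by simpa only [← map_sub, LinearIsometryEquiv.norm_map] using hLip y z)
    hfstar hΔ' hτ hε fun k => .of_inner (hunit k) (hcos k)
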